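/- For every p ≥ 1, the sequence of partial sums P_m := Σ_{i=1}^m e_{ii}^p (m ≥ 1) is an increasing approximate unit for A_p consisting of projections: each P_m is an orthogonal projection, P_m ≤ P_{m+1} for all m, and for every x ∈ A_p one has ‖x − x P_m‖ → 0 and ‖x − P_m x‖ → 0 as m → ∞. -/

import Mathlib

/-!
The operators `e p i j` form a system of matrix units at every level `p`: `(e p i j)* = e p j i`
and `e p i j * e p k l = δ_{jk} e p i l`. This passes from `p` to `p + 1` because
`e p a (n j m) * e (p + 1) j l = e p a (n l m)`: only one term of the strongly convergent series
survives multiplication by a matrix unit of the lower level (`mul_succ`). Hence the partial sums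
`P_m^p = Σ_{i<m} e p i i` are increasing projections.

The same absorption identity shows that `P_M^p * P_m^{p+1} = P_M^p` for all large `m`, since the
finitely many indices below `M` lie in finitely many blocks of the partition. An operator `x` that
is the norm limit of `x * P_M^p` is thus also the norm limit of `x * P_m^{p+1}`, because
`{x | x * Q_m → x}` is norm closed for every sequence of projections `Q`. Induction on `p` therefore
carries the approximate unit property of `A_p` to `P^{p+1}`, and `K_{p+1}` is handled by checking
generators. The induction starts at `p = 0`, where `P_m^0 → 1` strongly, so `P_m^0 x → x` in norm
for compact `x`; the right-handed version follows from `‖x (1 - P)‖² ≤ ‖(1 - P) x* x‖`, which only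
needs compactness of `x* x`.
-/

open Filter

open Pointwise

/-- The closed `*`-subalgebra of `B(H)` generated by `{e_{ij}^p : i, j}`. -/
noncomputable def Kset {H : Type*} [NormedAddCommGroup H] [InnerProductSpace ℂ H]
    [CompleteSpace H] (e : ℕ → ℕ → ℕ → (H →L[ℂ] H)) (p : ℕ) : Set (H →L[ℂ] H) :=
  closure ((NonUnitalStarAlgebra.adjoin ℂ {T : H →L[ℂ] H | ∃ i j, T = e p i j} :
    NonUnitalStarSubalgebra ℂ (H →L[ℂ] H)) : Set (H →L[ℂ] H))

/-- `A_0 = K(H)` and `A_p = A_{p-1} + K_p`. -/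
noncomputable def Aset {H : Type*} [NormedAddCommGroup H] [InnerProductSpace ℂ H]
    [CompleteSpace H] (e : ℕ → ℕ → ℕ → (H →L[ℂ] H)) : ℕ → Set (H →L[ℂ] H)
  | 0 => {T : H →L[ℂ] H | IsCompactOperator ⇑T}
  | (l + 1) => Aset e l + Kset e (l + 1)

section ApproximateUnits

variable {H : Type*} [NormedAddCommGroup H] [InnerProductSpace ℂ H] [CompleteSpace H]

/-- The operators `x` with `x * P m → x` in norm. -/
def rightApprox (P : ℕ → (H →L[ℂ] H)) : Set (H →L[ℂ] H) :=
  {x | Tendsto (fun m => x * P m) atTop (nhds x)}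

/-- The operators `x` with `P m * x → x` in norm. -/
def leftApprox (P : ℕ → (H →L[ℂ] H)) : Set (H →L[ℂ] H) :=
  {x | Tendsto (fun m => P m * x) atTop (nhds x)}

lemma star_mem_rightApprox {P : ℕ → (H →L[ℂ] H)} (hP : ∀ m, IsStarProjection (P m))
    {x : H →L[ℂ] H} : star x ∈ rightApprox P ↔ x ∈ leftApprox P := by
  have hs : ∀ m, star (P m) = P m := fun m => (hP m).isSelfAdjoint
  constructor
  · intro h
    have := Filter.Tendsto.star h
    simpa [leftApprox, star_mul, hs] using this
  · intro h
    have := Filter.Tendsto.star h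
    simpa [rightApprox, star_mul, hs] using this

lemma isClosed_rightApprox {P : ℕ → (H →L[ℂ] H)} (hP : ∀ m, IsStarProjection (P m)) :
    IsClosed (rightApprox P) := by
  refine isClosed_of_closure_subset fun x hx => ?_
  refine Metric.tendsto_atTop.2 fun ε hε => ?_
  obtain ⟨y, hy, hxy⟩ := Metric.mem_closure_iff.1 hx (ε / 2) (by positivity)
  obtain ⟨N, hN⟩ := Metric.tendsto_atTop.1 hy (ε / 2) (by positivity)
  refine ⟨N, fun m hm => ?_⟩
  have h1 := hN m hm
  rw [dist_eq_norm] at hxy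
  rw [dist_comm, dist_eq_norm] at h1 ⊢
  have h2 : x - x * P m = (x - y) * (1 - P m) + (y - y * P m) := by noncomm_ring
  have h3 : ‖(x - y) * (1 - P m)‖ ≤ ‖x - y‖ :=
    (norm_mul_le _ _).trans
      (mul_le_of_le_one_right (norm_nonneg _) ((hP m).one_sub.norm_le))
  rw [h2]
  linarith [norm_add_le ((x - y) * (1 - P m)) (y - y * P m)]

/-- The operators that `P` approximates from both sides form a `*`-subalgebra. -/
def approxAlgebra (P : ℕ → (H →L[ℂ] H)) (hP : ∀ m, IsStarProjection (P m)) :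
    NonUnitalStarSubalgebra ℂ (H →L[ℂ] H) where
  carrier := rightApprox P ∩ leftApprox P
  add_mem' := by
    rintro x y ⟨h1, h2⟩ ⟨h3, h4⟩
    exact ⟨by simpa [rightApprox, add_mul] using Filter.Tendsto.add h1 h3,
      by simpa [leftApprox, mul_add] using Filter.Tendsto.add h2 h4⟩
  zero_mem' := by constructor <;> simp [rightApprox, leftApprox]
  mul_mem' := by
    rintro x y ⟨h1, h2⟩ ⟨h3, h4⟩
    exact ⟨by simpa [rightApprox, mul_assoc] using Filter.Tendsto.const_mul x h3,
      by simpa [leftApprox, mul_assoc] using Filter.Tendsto.mul_const y h2⟩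
  smul_mem' := by
    rintro c x ⟨h1, h2⟩
    exact ⟨by simpa [rightApprox] using Filter.Tendsto.const_smul h1 c,
      by simpa [leftApprox] using Filter.Tendsto.const_smul h2 c⟩
  star_mem' := by
    rintro x ⟨h1, h2⟩
    exact ⟨(star_mem_rightApprox hP).2 h2,
      (star_mem_rightApprox hP).1 (by rwa [star_star])⟩

lemma isClosed_approxAlgebra {P : ℕ → (H →L[ℂ] H)} (hP : ∀ m, IsStarProjection (P m)) :
    IsClosed (approxAlgebra P hP : Set (H →L[ℂ] H)) := by
  refine (isClosed_rightApprox hP).inter ?_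
  have : leftApprox P = star ⁻¹' rightApprox P := by
    ext x
    exact (star_mem_rightApprox hP).symm
  rw [this]
  exact (isClosed_rightApprox hP).preimage continuous_star

/-- If each member of the sequence of projections `P` is eventually absorbed by `Q`, then `Q`
approximates every operator that `P` approximates. -/
lemma approxAlgebra_mono {P Q : ℕ → (H →L[ℂ] H)} (hP : ∀ m, IsStarProjection (P m))
    (hQ : ∀ m, IsStarProjection (Q m)) (hPQ : ∀ M, ∀ᶠ m in atTop, P M * Q m = P M) :
    approxAlgebra P hP ≤ approxAlgebra Q hQ := by
  have key : rightApprox P ⊆ rightApprox Q := by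
    intro x hx
    refine (isClosed_rightApprox hQ).mem_of_tendsto hx (Eventually.of_forall fun M => ?_)
    refine Tendsto.congr' ?_ tendsto_const_nhds
    filter_upwards [hPQ M] with m hm
    rw [mul_assoc, hm]
  rintro x ⟨h1, h2⟩
  exact ⟨key h1, (star_mem_rightApprox hQ).1 (key ((star_mem_rightApprox hP).2 h2))⟩

lemma IsCompactOperator.mem_leftApprox {P : ℕ → (H →L[ℂ] H)}
    (hP : ∀ m, IsStarProjection (P m))
    (hlim : ∀ v, Tendsto (fun m => P m v) atTop (nhds v))
    {x : H →L[ℂ] H} (hx : IsCompactOperator x) : x ∈ leftApprox P := by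
  refine Metric.tendsto_atTop.2 fun ε hε => ?_
  obtain ⟨K, hK, hxK⟩ :=
    IsCompactOperator.image_closedBall_subset_compact (f := (x : H →ₗ[ℂ] H)) hx 1
  obtain ⟨t, -, htf, hKt⟩ := hK.finite_cover_balls (e := ε / 4) (by positivity)
  have hev : ∀ᶠ m in atTop, ∀ y ∈ t, dist (P m y) y < ε / 4 :=
    (eventually_all_finite htf).2 fun y _ =>
      (hlim y).eventually (Metric.ball_mem_nhds y (by positivity))
  obtain ⟨N, hN⟩ := eventually_atTop.1 hev
  refine ⟨N, fun m hm => ?_⟩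
  rw [dist_comm, dist_eq_norm]
  refine lt_of_le_of_lt (?_ : _ ≤ ε / 2) (by linarith)
  refine ContinuousLinearMap.opNorm_le_of_unit_norm (by positivity) fun v hv => ?_
  have hvK : x v ∈ K := hxK ⟨v, by simp [hv], rfl⟩
  obtain ⟨y, hyt, hy⟩ := Set.mem_iUnion₂.1 (hKt hvK)
  have h1 := hN m hm y hyt
  rw [dist_comm, dist_eq_norm] at h1
  rw [Metric.mem_ball, dist_eq_norm] at hy
  have h2 : (x - P m * x) v = (1 - P m) (x v - y) + (y - P m y) := by
    simp
    abel
  have h3 : ‖(1 - P m) (x v - y)‖ ≤ ‖x v - y‖ :=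
    ((1 - P m).le_opNorm _).trans
      (mul_le_of_le_one_left (norm_nonneg _) ((hP m).one_sub.norm_le))
  rw [h2]
  linarith [norm_add_le ((1 - P m) (x v - y)) (y - P m y)]

lemma IsCompactOperator.mem_rightApprox {P : ℕ → (H →L[ℂ] H)}
    (hP : ∀ m, IsStarProjection (P m))
    (hlim : ∀ v, Tendsto (fun m => P m v) atTop (nhds v))
    {x : H →L[ℂ] H} (hx : IsCompactOperator x) : x ∈ rightApprox P := by
  have hc : IsCompactOperator (star x * x : H →L[ℂ] H) := hx.clm_comp (star x)
  have h1 : Tendsto (fun m => ‖P m * (star x * x) - star x * x‖) atTop (nhds 0) :=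
    tendsto_iff_norm_sub_tendsto_zero.1 (hc.mem_leftApprox hP hlim)
  have h2 := h1.sqrt
  rw [Real.sqrt_zero] at h2
  refine tendsto_iff_norm_sub_tendsto_zero.2 (squeeze_zero (fun _ => norm_nonneg _) (fun m => ?_) h2)
  refine Real.le_sqrt_of_sq_le ?_
  have hs : star (P m) = P m := (hP m).isSelfAdjoint
  -- the C*-identity turns `‖x (1 - P)‖²` into `‖(1 - P) x* x (1 - P)‖`
  have h3 : star (x * P m - x) * (x * P m - x)
      = (P m * (star x * x) - star x * x) * (P m - 1) := by
    simp only [star_sub, star_mul, hs]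
    noncomm_ring
  rw [sq, ← CStarRing.norm_star_mul_self, h3]
  refine (norm_mul_le _ _).trans (mul_le_of_le_one_right (norm_nonneg _) ?_)
  rw [norm_sub_rev]
  exact (hP m).one_sub.norm_le

end ApproximateUnits

lemma level_zero_apply {H : Type*} [NormedAddCommGroup H] [InnerProductSpace ℂ H]
    (ξ : HilbertBasis ℕ ℂ H)
    {f : ℕ → ℕ → (H →L[ℂ] H)}
    (h0 : ∀ i j k, f i j (ξ k) = if k = j then ξ i else 0) (i j : ℕ) (v : H) :
    f i j v = ξ.repr v j • ξ i := by
  have h1 := (ξ.hasSum_repr v).mapL (f i j)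
  simp only [map_smul, h0] at h1
  refine h1.unique ?_
  convert hasSum_single j ?_ using 1
  · simp
  · intro k hk
    simp [hk]

section MatrixUnits

variable {H : Type*} [NormedAddCommGroup H] [InnerProductSpace ℂ H] [CompleteSpace H]

/-- A system of matrix units indexed by `ℕ`. -/
structure IsMatrixUnits (f : ℕ → ℕ → (H →L[ℂ] H)) : Prop where
  star_eq : ∀ i j, star (f i j) = f j i
  mul_eq : ∀ i j k l, f i j * f k l = if j = k then f i l else 0

namespace IsMatrixUnits

variable {f : ℕ → ℕ → (H →L[ℂ] H)}

lemma mul_sum (hf : IsMatrixUnits f) (i j m : ℕ) :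
    f i j * ∑ k ∈ Finset.range m, f k k = if j < m then f i j else 0 := by
  rw [Finset.mul_sum, Finset.sum_congr rfl fun k _ => hf.mul_eq i j k k]
  simp

lemma isStarProjection_sum (hf : IsMatrixUnits f) (m : ℕ) :
    IsStarProjection (∑ k ∈ Finset.range m, f k k) where
  isSelfAdjoint := by
    rw [isSelfAdjoint_iff, star_sum]
    exact Finset.sum_congr rfl fun k _ => hf.star_eq k k
  isIdempotentElem := by
    rw [IsIdempotentElem, Finset.sum_mul]
    refine Finset.sum_congr rfl fun k hk => ?_
    rw [hf.mul_sum, if_pos (Finset.mem_range.1 hk)]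

lemma isStarProjection (hf : IsMatrixUnits f) (i : ℕ) : IsStarProjection (f i i) where
  isSelfAdjoint := hf.star_eq i i
  isIdempotentElem := by simp [IsIdempotentElem, hf.mul_eq]

lemma mem_approxAlgebra (hf : IsMatrixUnits f) (i j : ℕ) :
    f i j ∈ approxAlgebra (fun m => ∑ k ∈ Finset.range m, f k k) hf.isStarProjection_sum := by
  have key : ∀ i j, f i j ∈ rightApprox (fun m => ∑ k ∈ Finset.range m, f k k) := by
    intro i j
    refine Tendsto.congr' ?_ tendsto_const_nhds
    filter_upwards [eventually_gt_atTop j] with m hm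
    rw [hf.mul_sum, if_pos hm]
  refine ⟨key i j, (star_mem_rightApprox hf.isStarProjection_sum).1 ?_⟩
  rw [hf.star_eq]
  exact key j i

variable {n : ℕ → ℕ → ℕ} {g : ℕ → ℕ → (H →L[ℂ] H)}

/-- Multiplying the series for `g k l` by a matrix unit of the lower level leaves at most one
term: the one whose row index is `n j m`. -/
lemma mul_succ (hf : IsMatrixUnits f) (hmono : ∀ p, StrictMono (n p))
    (hdisj : ∀ p q, p ≠ q → ∀ k m, n p k ≠ n q m)
    (hg : ∀ i j, ∀ v : H, Tendsto (fun M => ∑ m ∈ Finset.range M, f (n i m) (n j m) v)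
      atTop (nhds (g i j v))) (a j m k l : ℕ) :
    f a (n j m) * g k l = if j = k then f a (n l m) else 0 := by
  ext v
  have h1 := ((f a (n j m)).continuous.tendsto _).comp (hg k l v)
  refine tendsto_nhds_unique h1 (Tendsto.congr' ?_ tendsto_const_nhds)
  filter_upwards [eventually_gt_atTop m] with M hM
  have h2 : ∀ r, f a (n j m) (f (n k r) (n l r) v)
      = (if n j m = n k r then f a (n l r) else 0) v := fun r => by
    rw [← hf.mul_eq]; rfl
  simp only [Function.comp_apply, map_sum, h2]
  by_cases hjk : j = k
  · subst hjk
    rw [Finset.sum_eq_single m]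
    · simp
    · intro r _ hr
      rw [if_neg fun h => hr ((hmono j).injective h).symm]
      rfl
    · intro h
      exact absurd (Finset.mem_range.2 hM) h
  · simp [hjk, hdisj j k hjk]

lemma succ (hf : IsMatrixUnits f) (hmono : ∀ p, StrictMono (n p))
    (hdisj : ∀ p q, p ≠ q → ∀ k m, n p k ≠ n q m)
    (hg : ∀ i j, ∀ v : H, Tendsto (fun M => ∑ m ∈ Finset.range M, f (n i m) (n j m) v)
      atTop (nhds (g i j v))) : IsMatrixUnits g where
  star_eq i j := by
    rw [ContinuousLinearMap.star_eq_adjoint, eq_comm, ContinuousLinearMap.eq_adjoint_iff]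
    intro v w
    have h1 := Filter.Tendsto.inner (𝕜 := ℂ) (hg j i v) (tendsto_const_nhds (x := w))
    have h2 := Filter.Tendsto.inner (𝕜 := ℂ) (tendsto_const_nhds (x := v)) (hg i j w)
    refine tendsto_nhds_unique h1 (h2.congr fun M => ?_)
    rw [inner_sum, sum_inner]
    refine Finset.sum_congr rfl fun m _ => ?_
    rw [← hf.star_eq (n i m) (n j m), ContinuousLinearMap.star_eq_adjoint,
      ContinuousLinearMap.adjoint_inner_left]
  mul_eq i j k l := by
    ext v
    refine tendsto_nhds_unique (hg i j (g k l v)) ?_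
    have h1 : ∀ m, f (n i m) (n j m) (g k l v)
        = (if j = k then f (n i m) (n l m) else 0) v := fun m => by
      rw [← hf.mul_succ hmono hdisj hg]; rfl
    simp only [h1]
    by_cases hjk : j = k
    · simpa [hjk] using hg i l v
    · simp [hjk]

/-- The partial sums of one level are eventually absorbed by those of the next: a finite set of
indices meets only finitely many blocks of the partition. -/
lemma eventually_absorb (hf : IsMatrixUnits f) (hmono : ∀ p, StrictMono (n p))
    (hdisj : ∀ p q, p ≠ q → ∀ k m, n p k ≠ n q m) (hcover : ∀ k, ∃ p m, n p m = k)
    (hg : ∀ i j, ∀ v : H, Tendsto (fun M => ∑ m ∈ Finset.range M, f (n i m) (n j m) v)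
      atTop (nhds (g i j v))) (M : ℕ) :
    ∀ᶠ m in atTop, (∑ k ∈ Finset.range M, f k k) * (∑ i ∈ Finset.range m, g i i)
      = ∑ k ∈ Finset.range M, f k k := by
  have h1 : ∀ k, ∀ᶠ m in atTop, f k k * (∑ i ∈ Finset.range m, g i i) = f k k := by
    intro k
    obtain ⟨p, r, rfl⟩ := hcover k
    filter_upwards [eventually_gt_atTop p] with m hm
    rw [Finset.mul_sum, Finset.sum_congr rfl fun i _ => hf.mul_succ hmono hdisj hg _ p r i i]
    simp [hm]
  filter_upwards [(eventually_all_finset (Finset.range M)).2 fun k _ => h1 k] with m hm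
  rw [Finset.sum_mul]
  exact Finset.sum_congr rfl hm

end IsMatrixUnits

lemma isMatrixUnits_zero (ξ : HilbertBasis ℕ ℂ H) {f : ℕ → ℕ → (H →L[ℂ] H)}
    (h0 : ∀ i j k, f i j (ξ k) = if k = j then ξ i else 0) : IsMatrixUnits f where
  star_eq i j := by
    rw [ContinuousLinearMap.star_eq_adjoint, eq_comm, ContinuousLinearMap.eq_adjoint_iff]
    intro v w
    rw [level_zero_apply ξ h0, level_zero_apply ξ h0, inner_smul_left, inner_smul_right,
      ξ.repr_apply_apply, ξ.repr_apply_apply, inner_conj_symm, mul_comm]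
  mul_eq i j k l := by
    ext v
    rw [mul_apply_eq_comp, level_zero_apply ξ h0 k l, map_smul, h0]
    by_cases hjk : j = k
    · simp [hjk, level_zero_apply ξ h0 i l]
    · simp [hjk, Ne.symm hjk]

end MatrixUnits

/-- for every `p ≥ 1`, the partial sums `P_m = Σ_{i<m} e_{ii}^p` form an
increasing approximate unit for `A_p` consisting of projections. -/
theorem partial_sums_approximate_unit
    {H : Type*} [NormedAddCommGroup H] [InnerProductSpace ℂ H] [CompleteSpace H]
    (ξ : HilbertBasis ℕ ℂ H)
    (n : ℕ → ℕ → ℕ) (hmono : ∀ p, StrictMono (n p))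
    (hdisj : ∀ p q, p ≠ q → ∀ k m, n p k ≠ n q m)
    (hcover : ∀ k, ∃ p m, n p m = k)
    (e : ℕ → ℕ → ℕ → (H →L[ℂ] H))
    (h0 : ∀ i j k, e 0 i j (ξ k) = if k = j then ξ i else 0)
    (hrec : ∀ p i j, ∀ v : H, Filter.Tendsto
      (fun M => ∑ m ∈ Finset.range M, e p (n i m) (n j m) v)
      Filter.atTop (nhds (e (p + 1) i j v)))
    :
    ∀ p : ℕ, 1 ≤ p →
      (∀ m : ℕ, 1 ≤ m →
        IsSelfAdjoint (∑ i ∈ Finset.range m, e p i i) ∧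
        IsIdempotentElem (∑ i ∈ Finset.range m, e p i i) ∧
        ((∑ i ∈ Finset.range (m + 1), e p i i) -
          (∑ i ∈ Finset.range m, e p i i)).IsPositive) ∧
      (∀ x ∈ Aset e p,
        Filter.Tendsto (fun m => ‖x - x * ∑ i ∈ Finset.range m, e p i i‖)
          Filter.atTop (nhds 0) ∧
        Filter.Tendsto (fun m => ‖x - (∑ i ∈ Finset.range m, e p i i) * x‖)
          Filter.atTop (nhds 0)) := by
  have hMU : ∀ p, IsMatrixUnits (e p) := by
    intro p
    induction p with
    | zero => exact isMatrixUnits_zero ξ h0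
    | succ p ih => exact ih.succ hmono hdisj (hrec p)
  have hA : ∀ p, Aset e p ⊆ approxAlgebra (fun m => ∑ i ∈ Finset.range m, e p i i)
      (hMU p).isStarProjection_sum := by
    intro p
    induction p with
    | zero =>
      intro x hx
      have hlim : ∀ v, Tendsto (fun m => (∑ i ∈ Finset.range m, e 0 i i) v) atTop (nhds v) := by
        intro v
        simpa [level_zero_apply ξ h0] using (ξ.hasSum_repr v).tendsto_sum_nat
      exact ⟨IsCompactOperator.mem_rightApprox (hMU 0).isStarProjection_sum hlim hx,
        IsCompactOperator.mem_leftApprox (hMU 0).isStarProjection_sum hlim hx⟩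
    | succ p ih =>
      rintro _ ⟨y, hy, z, hz, rfl⟩
      refine add_mem ?_ ?_
      · exact approxAlgebra_mono (hMU p).isStarProjection_sum (hMU (p + 1)).isStarProjection_sum
          ((hMU p).eventually_absorb hmono hdisj hcover (hrec p)) (ih hy)
      · refine closure_minimal ?_ (isClosed_approxAlgebra (hMU (p + 1)).isStarProjection_sum) hz
        refine NonUnitalStarAlgebra.adjoin_le ?_
        rintro _ ⟨i, j, rfl⟩
        exact (hMU (p + 1)).mem_approxAlgebra i j
  intro p _
  refine ⟨fun m _ => ⟨((hMU p).isStarProjection_sum m).isSelfAdjoint,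
    ((hMU p).isStarProjection_sum m).isIdempotentElem, ?_⟩, fun x hx => ?_⟩
  · rw [Finset.sum_range_succ, add_sub_cancel_left]
    exact ContinuousLinearMap.IsPositive.of_isStarProjection ((hMU p).isStarProjection m)
  · obtain ⟨h1, h2⟩ := hA p hx
    constructor
    · simpa only [norm_sub_rev] using tendsto_iff_norm_sub_tendsto_zero.1 h1
    · simpa only [norm_sub_rev] using tendsto_iff_norm_sub_tendsto_zero.1 h2
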